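/- arXiv:2508.17629 — 6 statements merged into one kernel-verified Lean document; each statement's English description precedes it below -/
import Mathlib

section
/- Let p: E → B and p': E' → B' be (Hurewicz) fibrations with E and E' metric spaces, and suppose there is a pullback square with top map E' → E, left map p', right map p, and bottom map f: B' → B (i.e., p' is the pullback of p along f). Then dsecat(p') ≤ dsecat(p). -/
open MeasureTheory unitInterval Set

universe u v

/-- A (Hurewicz) fibration: a continuous map with the homotopy lifting property
with respect to all topological spaces. -/
def IsHurewiczFibration {E B : Type*} [TopologicalSpace E] [TopologicalSpace B]
    (p : E → B) : Prop :=
  Continuous p ∧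
  ∀ (X : Type u) [TopologicalSpace X] (f : X → E) (H : X × I → B),
    Continuous f → Continuous H → (∀ x, H (x, 0) = p (f x)) →
    ∃ G : X × I → E, Continuous G ∧ (∀ x, G (x, 0) = f x) ∧ ∀ z, H z = p (G z)

/-- `dsecat p`: the distributional sectional category of `p : E → B` (with `E` a metric
space), namely the smallest `n` such that the fibration
`𝔅ₙ₊₁(p) : Eₙ₊₁(p) → B` of probability measures with finite support of size at most `n+1`
contained in single fibers of `p` (with the Lévy–Prokhorov metric topology) admits a
continuous section.  (Value `⊤` if no such `n` exists.) -/
noncomputable def dsecat {E : Type u} {B : Type v} [MetricSpace E] [TopologicalSpace B]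
    (p : E → B) : ℕ∞ :=
  letI : MeasurableSpace E := borel E
  haveI : BorelSpace E := ⟨rfl⟩
  sInf {n : ℕ∞ | ∃ m : ℕ, n = (m : ℕ∞) ∧
    ∃ s : B → LevyProkhorov (ProbabilityMeasure E), Continuous s ∧
      ∀ b : B, ∃ S : Finset E, S.card ≤ m + 1 ∧ (↑S : Set E) ⊆ p ⁻¹' {b} ∧
        (s b).toMeasure (↑S : Set E) = 1}

/-- The classical sectional category (Schwarz genus) of a map: the least `n` such that the
base admits a cover by `n+1` open sets over each of which there is a continuous partial
section. -/
noncomputable def secat {E : Type u} {B : Type v} [TopologicalSpace E] [TopologicalSpace B]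
    (p : E → B) : ℕ∞ :=
  sInf {n : ℕ∞ | ∃ m : ℕ, n = (m : ℕ∞) ∧
    ∃ U : Fin (m + 1) → Set B, (∀ i, IsOpen (U i)) ∧ (⋃ i, U i) = Set.univ ∧
      ∀ i, ∃ s : U i → E, Continuous s ∧ ∀ x : U i, p (s x) = (x : B)}

/-- The point `(i)/(r-1)` of the unit interval, for `i : Fin r`. -/
noncomputable def tDiv (r : ℕ) (i : Fin r) : I :=
  Set.projIcc (0 : ℝ) 1 zero_le_one ((i : ℝ) / (r - 1))

/-- The space `E^I_B` of paths in `E` lying in one single fiber of `p : E → B`. -/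
def FibredPaths {E : Type u} {B : Type v} [TopologicalSpace E] [TopologicalSpace B]
    (p : E → B) : Type u :=
  {γ : C(I, E) // ∃ b : B, ∀ t : I, p (γ t) = b}

/-- The fibred product `E^r_B` of `r` copies of `E` over `B`. -/
def FibredProd {E : Type u} {B : Type v} [TopologicalSpace E] [TopologicalSpace B]
    (p : E → B) (r : ℕ) : Type u :=
  {x : Fin r → E // ∀ i j, p (x i) = p (x j)}

/-- The fibration `Π_r^E : E^I_B → E^r_B`,
`γ ↦ (γ(0), γ(1/(r-1)), …, γ((r-2)/(r-1)), γ(1))`. -/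
noncomputable def parmEval {E : Type u} {B : Type v} [TopologicalSpace E] [TopologicalSpace B]
    (p : E → B) (r : ℕ) : FibredPaths p → FibredProd p r :=
  fun γ => ⟨fun i => γ.1 (tDiv r i), by
    obtain ⟨b, hb⟩ := γ.2
    intro i j
    rw [hb, hb]⟩

noncomputable instance {E : Type u} {B : Type v} [MetricSpace E] [TopologicalSpace B] (p : E → B) :
    MetricSpace (FibredPaths p) :=
  inferInstanceAs (MetricSpace {γ : C(I, E) // ∃ b : B, ∀ t : I, p (γ t) = b})

instance {E : Type u} {B : Type v} [TopologicalSpace E] [TopologicalSpace B] (p : E → B) :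
    TopologicalSpace (FibredPaths p) :=
  inferInstanceAs (TopologicalSpace {γ : C(I, E) // ∃ b : B, ∀ t : I, p (γ t) = b})

instance {E : Type u} {B : Type v} [TopologicalSpace E] [TopologicalSpace B] (p : E → B)
    (r : ℕ) : TopologicalSpace (FibredProd p r) :=
  inferInstanceAs (TopologicalSpace {x : Fin r → E // ∀ i j, p (x i) = p (x j)})

/-- The `r`-th sequential parametrized distributional complexity
`dTC_r[p : E → B] = dsecat (Π_r^E)`. -/
noncomputable def dTCfib {E : Type u} {B : Type v} [MetricSpace E] [TopologicalSpace B]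
    (p : E → B) (r : ℕ) : ℕ∞ :=
  dsecat (parmEval p r)

/-- The `r`-th sequential parametrized topological complexity
`TC_r[p : E → B] = secat (Π_r^E)`. -/
noncomputable def TCfib {E : Type u} {B : Type v} [TopologicalSpace E] [TopologicalSpace B]
    (p : E → B) (r : ℕ) : ℕ∞ :=
  secat (parmEval p r)

/-- The fibration `π_r^X : X^I → X^r`, `φ ↦ (φ(0), φ(1/(r-1)), …, φ(1))`. -/
noncomputable def freeEval (X : Type u) [TopologicalSpace X] (r : ℕ) :
    C(I, X) → (Fin r → X) :=
  fun φ i => φ (tDiv r i)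

/-- The `r`-th sequential distributional complexity `dTC_r(X) = dsecat (π_r^X)`. -/
noncomputable def dTC (X : Type u) [MetricSpace X] (r : ℕ) : ℕ∞ :=
  dsecat (freeEval X r)

/-- The distributional category `dcat(X) = dsecat (P₀(X) → X)` of a pointed space,
where `P₀(X) = {φ : I → X | φ(1) = x₀}` and the fibration is evaluation at `0`. -/
noncomputable def dcat (X : Type u) [MetricSpace X] (x₀ : X) : ℕ∞ :=
  dsecat (fun φ : {φ : C(I, X) // φ 1 = x₀} => φ.1 0)

/-- Existence of the pulled back section of finitely supported measures. -/
theorem dsecat_pullback_section {E B E' B' : Type} [MetricSpace E] [TopologicalSpace B]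
    [MetricSpace E'] [TopologicalSpace B'] [MeasurableSpace E] [BorelSpace E]
    [MeasurableSpace E'] [BorelSpace E'] (p : E → B) (p' : E' → B')
    (f : B' → B) (g : E' → E) (hf : Continuous f)
    (hsurj : ∀ b e, f b = p e → ∃ x, p' x = b ∧ g x = e)
    (hnhds : ∀ x : E', nhds x = Filter.comap (fun y => (p' y, g y)) (nhds (p' x, g x)))
    (m : ℕ) (s : B → LevyProkhorov (ProbabilityMeasure E)) (hs : Continuous s)
    (hS : ∀ b : B, ∃ S : Finset E, S.card ≤ m + 1 ∧ (↑S : Set E) ⊆ p ⁻¹' {b} ∧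
        (s b).toMeasure (↑S : Set E) = 1) :
    ∃ s' : B' → LevyProkhorov (ProbabilityMeasure E'), Continuous s' ∧
      ∀ b : B', ∃ S : Finset E', S.card ≤ m + 1 ∧ (↑S : Set E') ⊆ p' ⁻¹' {b} ∧
        (s' b).toMeasure (↑S : Set E') = 1 := by
  classical
  choose S hcard hfib hone using hS
  have hone' : ∀ b, ((s b).toMeasure : Measure E) (S b : Set E) = 1 := by
    intro b
    rw [← ProbabilityMeasure.ennreal_coeFn_eq_coeFn_toMeasure, hone b]; rfl
  have hT : ∀ b : B', ∃ T : E → E', Measurable T ∧ ∀ e ∈ S (f b), p' (T e) = b ∧ g (T e) = e := by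
    intro b
    have h1 : ∀ e ∈ S (f b), ∃ x, p' x = b ∧ g x = e := fun e he =>
      hsurj b e (hfib (f b) he).symm
    have hne : (S (f b)).Nonempty := by
      rw [Finset.nonempty_iff_ne_empty]
      intro h
      have := hone' (f b)
      simp [h] at this
    obtain ⟨e0, he0⟩ := hne
    have : Nonempty E' := ⟨(h1 e0 he0).choose⟩
    choose! t ht using h1
    refine ⟨fun e => if e ∈ S (f b) then t e else t e0, ?_, ?_⟩
    · refine (measurable_const (a := t e0)).measurable_of_countable_ne ?_
      refine (S (f b)).countable_toSet.mono ?_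
      intro e he
      by_contra h
      have h' : e ∉ S (f b) := h
      simp [h'] at he
    · intro e he
      simpa [he] using ht e he
  choose T hTm hT using hT
  refine ⟨fun b => .ofMeasure ((s (f b)).toMeasure.map (hTm b).aemeasurable), ?_, ?_⟩
  · rw [continuous_iff_continuousAt]
    intro b0
    rw [ContinuousAt, Metric.tendsto_nhds]
    intro ε hε
    have hloc : ∀ e ∈ S (f b0), ∃ δ : ℝ, 0 < δ ∧ ∀ᶠ b in nhds b0, ∀ x, p' x = b →
        dist (g x) e < δ → dist x (T b0 e) < ε / 2 := by
      intro e he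
      have h := Metric.ball_mem_nhds (T b0 e) (half_pos hε)
      rw [hnhds, (hT b0 e he).1, (hT b0 e he).2, Filter.mem_comap] at h
      obtain ⟨W, hW, hWsub⟩ := h
      rw [nhds_prod_eq, Filter.mem_prod_iff] at hW
      obtain ⟨V, hV, U, hU, hVU⟩ := hW
      obtain ⟨δ, hδ, hball⟩ := Metric.mem_nhds_iff.1 hU
      refine ⟨δ, hδ, Filter.mem_of_superset hV ?_⟩
      intro b hb x hx hd
      exact hWsub (hVU ⟨by simpa [hx] using hb, hball hd⟩)
    choose! D hD hloc using hloc
    have hev : ∀ᶠ b in nhds b0, ∀ e ∈ S (f b0), ∀ x, p' x = b →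
        dist (g x) e < D e → dist x (T b0 e) < ε / 2 :=
      (Filter.eventually_all_finset _).2 hloc
    have hδ : ∃ δ : ℝ, 0 < δ ∧ δ < ε / 2 ∧ ∀ e ∈ S (f b0), δ < D e := by
      have h1 : ∀ᶠ δ : ℝ in nhdsWithin 0 (Ioi 0), ∀ e ∈ S (f b0), δ < D e :=
        (Filter.eventually_all_finset _).2 fun e he =>
          nhdsWithin_le_nhds (Iio_mem_nhds (hD e he))
      have h2 : ∀ᶠ δ : ℝ in nhdsWithin 0 (Ioi 0), δ < ε / 2 :=
        nhdsWithin_le_nhds (Iio_mem_nhds (half_pos hε))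
      obtain ⟨δ, ⟨a, b⟩, c⟩ := ((h1.and h2).and self_mem_nhdsWithin).exists
      exact ⟨δ, c, b, a⟩
    obtain ⟨δ, hδ0, hδε, hδD⟩ := hδ
    have hclose : ∀ᶠ b in nhds b0, dist (s (f b)) (s (f b0)) < δ :=
      Metric.tendsto_nhds.1 (hs.comp hf).continuousAt δ hδ0
    filter_upwards [hev, hclose] with b hb hd
    rw [dist_comm, LevyProkhorov.dist_probabilityMeasure_def]
    refine lt_of_le_of_lt ?_ (half_lt_self hε)
    refine levyProkhorovDist_le_of_forall_le _ _ (half_pos hε).le ?_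
    intro ε' A hε' hA
    have hlp : levyProkhorovEDist ((s (f b)).toMeasure : Measure E) (s (f b0)).toMeasure
        < ENNReal.ofReal δ := by
      rw [← LevyProkhorov.edist_probabilityMeasure_def, edist_dist]
      exact (ENNReal.ofReal_lt_ofReal_iff hδ0).2 hd
    have hnull : ∀ c, ((s c).toMeasure : Measure E) ((S c : Set E)ᶜ) = 0 := fun c =>
      (prob_compl_eq_zero_iff (S c).measurableSet).2 (hone' c)
    have hinter : ∀ c (X : Set E), ((s c).toMeasure : Measure E) X
        ≤ ((s c).toMeasure : Measure E) (X ∩ S c) := fun c X =>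
      (measure_inter_conull (hnull c)).ge
    simp only [ProbabilityMeasure.toMeasure_map]
    rw [Measure.map_apply (hTm b0) hA,
      Measure.map_apply (hTm b) Metric.isOpen_thickening.measurableSet]
    have hFm : MeasurableSet (T b0 ⁻¹' A ∩ S (f b0)) :=
      (hTm b0 hA).inter (S (f b0)).measurableSet
    have key := right_measure_le_of_levyProkhorovEDist_lt hlp hFm
    rw [ENNReal.toReal_ofReal hδ0.le] at key
    refine (hinter _ _).trans (key.trans ?_)
    refine add_le_add ((hinter _ _).trans (measure_mono ?_))
      (ENNReal.ofReal_le_ofReal (hδε.trans hε').le)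
    rintro e ⟨he, heS⟩
    obtain ⟨e1, ⟨he1A, he1S⟩, hde⟩ := Metric.mem_thickening_iff.1 he
    refine Metric.mem_thickening_iff.2 ⟨T b0 e1, he1A, ?_⟩
    refine (hb e1 he1S (T b e) (hT b e heS).1 ?_).trans hε'
    rw [(hT b e heS).2]
    exact hde.trans (hδD e1 he1S)
  · intro b
    refine ⟨(S (f b)).image (T b), Finset.card_image_le.trans (hcard _), ?_, ?_⟩
    · intro x hx
      obtain ⟨e, he, rfl⟩ := Finset.mem_image.1 (Finset.mem_coe.1 hx)
      exact (hT b e he).1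
    · rw [← ENNReal.coe_inj, ProbabilityMeasure.ennreal_coeFn_eq_coeFn_toMeasure,
        ProbabilityMeasure.toMeasure_map,
        Measure.map_apply (hTm b) (Finset.measurableSet _)]
      refine le_antisymm prob_le_one ?_
      rw [ENNReal.coe_one, ← hone' (f b)]
      refine measure_mono ?_
      intro e he
      exact Finset.mem_coe.2 (Finset.mem_image_of_mem _ he)

/-- If `p' : E' → B'` is the pullback of a fibration `p : E → B`
(between metric total spaces) along `f : B' → B`, then `dsecat p' ≤ dsecat p`. -/
theorem dsecat_pullback_le {E B E' B' : Type} [MetricSpace E] [TopologicalSpace B]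
    [MetricSpace E'] [TopologicalSpace B'] (p : E → B) (p' : E' → B')
    (f : B' → B) (g : E' → E)
    (hp : IsHurewiczFibration p) (hp' : IsHurewiczFibration p')
    (hf : Continuous f) (hg : Continuous g)
    (hcomm : ∀ x, p (g x) = f (p' x))
    (hpullback : IsHomeomorph
      (fun x : E' => (⟨(p' x, g x), (hcomm x).symm⟩ : {q : B' × E // f q.1 = p q.2}))) :
    dsecat p' ≤ dsecat p := by
  letI : MeasurableSpace E := borel E
  haveI : BorelSpace E := ⟨rfl⟩
  letI : MeasurableSpace E' := borel E'
  haveI : BorelSpace E' := ⟨rfl⟩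
  unfold dsecat
  refine le_sInf ?_
  rintro n ⟨m, rfl, s, hs, hS⟩
  refine sInf_le ⟨m, rfl, ?_⟩
  refine dsecat_pullback_section p p' f g hf ?_ ?_ m s hs hS
  · intro b e h
    obtain ⟨x, hx⟩ := hpullback.bijective.surjective ⟨(b, e), h⟩
    have hx' := congrArg Subtype.val hx
    exact ⟨x, congrArg Prod.fst hx', congrArg Prod.snd hx'⟩
  · intro x
    exact (Topology.IsInducing.subtypeVal.comp hpullback.isInducing).nhds_eq_comap x
end

section
/- Let p: E → B and p': E' → B be fibrations with E and E' metric spaces, and suppose there is a map f: E → E' such that p' ∘ f is homotopic to p. Then dsecat(p') ≤ dsecat(p). -/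
open MeasureTheory unitInterval Set

universe u v

/-- Push-forward along a continuous map is Lévy–Prokhorov continuous at finitely supported
probability measures. -/
lemma lp_map_close {E E' : Type*} [MetricSpace E] [MetricSpace E'] [MeasurableSpace E]
    [BorelSpace E] [MeasurableSpace E'] [BorelSpace E'] (g : E → E') (hg : Continuous g)
    (μ : Measure E) [IsProbabilityMeasure μ] (S : Finset E) (hS : μ (↑S : Set E) = 1)
    (ε : ℝ) (hε : 0 < ε) :
    ∃ δ > 0, ∀ ν : Measure E, IsProbabilityMeasure ν → levyProkhorovDist ν μ < δ →
      levyProkhorovDist (ν.map g) (μ.map g) ≤ ε := by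
  have h1 : ∃ δ > 0, δ ≤ ε ∧ ∀ x ∈ S, ∀ y, dist x y < δ → dist (g x) (g y) < ε := by
    have : ∀ᶠ δ in nhdsWithin (0 : ℝ) (Ioi 0),
        ∀ x ∈ S, ∀ y, dist x y < δ → dist (g x) (g y) < ε := by
      rw [Filter.eventually_all_finset]
      intro x _
      obtain ⟨d, hd, h⟩ := Metric.continuousAt_iff.1 (hg.continuousAt (x := x)) ε hε
      filter_upwards [Ioo_mem_nhdsGT hd] with δ hδ y hy
      rw [dist_comm]
      apply h
      rw [dist_comm]
      exact hy.trans hδ.2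
    obtain ⟨δ, h, h'⟩ := (this.and (Ioc_mem_nhdsGT hε)).exists
    exact ⟨δ, h'.1, h'.2, h⟩
  obtain ⟨δ, hδ, hδε, hS'⟩ := h1
  refine ⟨δ, hδ, fun ν hν hd => ?_⟩
  haveI := Measure.isProbabilityMeasure_map (μ := ν) hg.measurable.aemeasurable
  haveI := Measure.isProbabilityMeasure_map (μ := μ) hg.measurable.aemeasurable
  apply levyProkhorovDist_le_of_forall_le _ _ hε.le
  intro ε' A hε' hA
  have hd' : levyProkhorovEDist ν μ < ENNReal.ofReal δ :=
    (ENNReal.lt_ofReal_iff_toReal_lt (levyProkhorovEDist_ne_top ν μ)).2 hd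
  rw [Measure.map_apply hg.measurable hA,
    Measure.map_apply hg.measurable Metric.isOpen_thickening.measurableSet]
  refine (left_measure_le_of_levyProkhorovEDist_lt hd' (hg.measurable hA)).trans ?_
  rw [ENNReal.toReal_ofReal hδ.le]
  refine add_le_add ?_ (ENNReal.ofReal_le_ofReal (by linarith))
  have hae : ∀ᵐ x ∂μ, x ∈ (↑S : Set E) :=
    (prob_compl_eq_zero_iff S.measurableSet).2 hS
  apply measure_mono_ae
  filter_upwards [hae] with x hx hxt
  obtain ⟨y, hy, hxy⟩ := Metric.mem_thickening_iff.1 hxt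
  exact Metric.mem_thickening_iff.2 ⟨g y, hy, (hS' x hx y hxy).trans hε'⟩

/-- If `p : E → B` and `p' : E' → B` are fibrations with metric total
spaces and `f : E → E'` is a map with `p' ∘ f` homotopic to `p`, then
`dsecat p' ≤ dsecat p`. -/
theorem dsecat_le_of_factor_up_to_homotopy {E E' B : Type} [MetricSpace E] [MetricSpace E']
    [TopologicalSpace B] (p : E → B) (p' : E' → B) (f : E → E')
    (hp : IsHurewiczFibration p) (hp' : IsHurewiczFibration p')
    (hf : Continuous f)
    (hhtpy : ∃ H : E × I → B, Continuous H ∧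
      (∀ e, H (e, 0) = p' (f e)) ∧ (∀ e, H (e, 1) = p e)) :
    dsecat p' ≤ dsecat p := by
  obtain ⟨H, hH, hH0, hH1⟩ := hhtpy
  obtain ⟨G, hG, -, hG1⟩ := hp'.2 (ULift E) (fun x => f x.down) (fun z => H (z.1.down, z.2))
    (hf.comp continuous_uliftDown)
    (hH.comp ((continuous_uliftDown.comp continuous_fst).prodMk continuous_snd))
    (fun x => hH0 x.down)
  let g : E → E' := fun e => G (ULift.up e, 1)
  have hg : Continuous g := hG.comp (continuous_uliftUp.prodMk continuous_const)
  have hpg : ∀ e, p' (g e) = p e := fun e => by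
    rw [← hH1 e]
    exact (hG1 (ULift.up e, 1)).symm
  clear_value g
  classical
  unfold dsecat
  letI : MeasurableSpace E := borel E
  haveI : BorelSpace E := ⟨rfl⟩
  letI : MeasurableSpace E' := borel E'
  haveI : BorelSpace E' := ⟨rfl⟩
  apply sInf_le_sInf
  rintro n ⟨m, rfl, s, hs, hsup⟩
  refine ⟨m, rfl, fun b => LevyProkhorov.ofMeasure
    ((s b).toMeasure.map hg.measurable.aemeasurable), ?_, ?_⟩
  · rw [continuous_iff_continuousAt]
    intro b
    obtain ⟨S, -, -, hS⟩ := hsup b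
    have hS1 : ((s b).toMeasure : Measure E) (↑S : Set E) = 1 := by
      rw [← ProbabilityMeasure.ennreal_coeFn_eq_coeFn_toMeasure, hS, ENNReal.coe_one]
    rw [ContinuousAt, Metric.tendsto_nhds]
    intro ε hε
    obtain ⟨δ, hδ, h⟩ := lp_map_close g hg _ S hS1 (ε / 2) (half_pos hε)
    have := Metric.tendsto_nhds.1 (hs.continuousAt (x := b)) δ hδ
    filter_upwards [this] with c hc
    have := h ((s c).toMeasure : Measure E) inferInstance hc
    exact lt_of_le_of_lt this (half_lt_self hε)
  · intro b
    obtain ⟨S, hc, hSb, hS⟩ := hsup b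
    refine ⟨S.image g, Finset.card_image_le.trans hc, ?_, ?_⟩
    · intro y hy
      obtain ⟨x, hx, rfl⟩ := Finset.mem_image.1 (Finset.mem_coe.1 hy)
      have := hSb (Finset.mem_coe.2 hx)
      simp only [mem_preimage, mem_singleton_iff] at this ⊢
      rw [hpg, this]
    · apply le_antisymm (ProbabilityMeasure.apply_le_one _ _)
      rw [ProbabilityMeasure.map_apply _ _ (Finset.measurableSet _), ← hS]
      apply ProbabilityMeasure.apply_mono
      intro x hx
      exact Finset.mem_coe.2 (Finset.mem_image_of_mem g (Finset.mem_coe.1 hx))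
end

section
/- Let p: E → B and p': E' → B' be fibrations with E and E' metric spaces, and suppose there is a commutative diagram of maps F: E → E', F': E' → E over maps f: B → B' and f': B' → B (i.e., p' ∘ F = f ∘ p and p ∘ F' = f' ∘ p'). If f' ∘ f is homotopic to the identity of B, then dsecat(p) ≤ dsecat(p'). -/
open MeasureTheory unitInterval Set

universe u v

open Filter Topology Metric in
/-- Pushing forward a continuous family of finitely supported measures along a family of maps which
is jointly continuous along the supports gives a continuous family. -/
lemma continuous_push_family {E E' B : Type*} [MetricSpace E] [MetricSpace E']
    [TopologicalSpace B] [MeasurableSpace E] [BorelSpace E] [MeasurableSpace E'] [BorelSpace E']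
    (s : B → LevyProkhorov (ProbabilityMeasure E')) (hs : Continuous s)
    (S : B → Finset E') (hS : ∀ b, ((s b).toMeasure : Measure E') (S b : Set E') = 1)
    (g : B → E' → E) (hg : ∀ b, Measurable (g b))
    (hcont : ∀ b₀, ∀ e₀ ∈ S b₀, ∀ ε > 0, ∀ᶠ z : E' × B in 𝓝 (e₀, b₀), z.1 ∈ S z.2 →
      dist (g z.2 z.1) (g b₀ e₀) < ε) :
    Continuous (fun b => LevyProkhorov.ofMeasure
      ((s b).toMeasure.map (hg b).aemeasurable)) := by
  have hinter : ∀ b (A : Set E'), ((s b).toMeasure : Measure E') (A ∩ S b) =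
      ((s b).toMeasure : Measure E') A := by
    intro b A
    rw [Set.inter_comm]
    refine Measure.measure_inter_eq_of_ae ?_
    simp_rw [← prob_compl_eq_zero_iff (Finset.measurableSet _)] at hS
    exact measure_eq_zero_iff_ae_notMem.mp (hS b) |>.mono (fun x hx => by simpa using hx)
  rw [continuous_iff_continuousAt]
  intro b₀
  rw [ContinuousAt, Metric.tendsto_nhds]
  intro ε hε
  have hε2 : 0 < ε / 2 := by positivity
  -- a uniform radius
  have hrad : ∀ e₀ ∈ S b₀, ∀ᶠ δ : ℝ in 𝓝[>] 0, ∀ᶠ b in 𝓝 b₀, ∀ e, dist e e₀ < δ → e ∈ S b →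
      dist (g b e) (g b₀ e₀) < ε / 2 := by
    intro e₀ he₀
    have h := hcont b₀ e₀ he₀ _ hε2
    rw [nhds_prod_eq, eventually_prod_iff] at h
    obtain ⟨pa, hpa, pb, hpb, h⟩ := h
    obtain ⟨r, hr, hball⟩ := Metric.eventually_nhds_iff.mp hpa
    filter_upwards [Ioo_mem_nhdsGT hr] with δ hδ
    filter_upwards [hpb] with b hb e he hes
    exact h (hball (he.trans hδ.2)) hb hes
  rw [← Finset.eventually_all] at hrad
  obtain ⟨δ, hδ, hδ0, hδε⟩ := (hrad.and (Ioo_mem_nhdsGT hε2)).exists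
  rw [← Finset.eventually_all] at hδ
  have hclose := (Metric.tendsto_nhds.mp (hs.tendsto b₀)) δ hδ0
  filter_upwards [hδ, hclose] with b hb hd
  rw [LevyProkhorov.dist_probabilityMeasure_def] at hd ⊢
  have hd' : levyProkhorovEDist ((s b).toMeasure : Measure E') ((s b₀).toMeasure : Measure E')
      < ENNReal.ofReal δ := by
    rw [levyProkhorovDist] at hd
    exact (ENNReal.lt_ofReal_iff_toReal_lt (levyProkhorovEDist_ne_top _ _)).mpr hd
  refine lt_of_le_of_lt (levyProkhorovDist_le_of_forall_le _ _ hε2.le ?_) (half_lt_self hε)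
  intro η A hη hA
  have h1 := left_measure_le_of_levyProkhorovEDist_lt hd'
    (B := g b ⁻¹' A ∩ S b) ((hg b hA).inter (S b).measurableSet)
  rw [ENNReal.toReal_ofReal hδ0.le, hinter b] at h1
  simp only [ProbabilityMeasure.toMeasure_map]
  rw [Measure.map_apply (hg b) hA, Measure.map_apply (hg b₀) isOpen_thickening.measurableSet]
  refine h1.trans (add_le_add ?_ (ENNReal.ofReal_le_ofReal (by linarith)))
  rw [← hinter b₀]
  refine measure_mono ?_
  rintro x ⟨hx, hxS⟩
  obtain ⟨e, ⟨heA, heS⟩, hxe⟩ := mem_thickening_iff.mp hx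
  refine mem_thickening_iff.mpr ⟨g b e, heA, ?_⟩
  rw [dist_comm]
  exact (hb x hxS e (by rwa [dist_comm]) heS).trans hη

open Topology in
lemma exists_transport.{w} {E B E' B' : Type} [MetricSpace E]
    [TopologicalSpace B] [MetricSpace E'] [TopologicalSpace B']
    (p : E → B) (p' : E' → B') (F' : E' → E) (f : B → B') (f' : B' → B)
    (hp : IsHurewiczFibration.{w} p) (hF' : Continuous F')
    (hcomm₂ : ∀ e', p (F' e') = f' (p' e'))
    (H : B × I → B) (hH : Continuous H) (hH0 : ∀ b, H (b, 0) = f' (f b))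
    (hH1 : ∀ b, H (b, 1) = b) :
    ∃ φ : {x : E' × B // p' x.1 = f x.2} → E, Continuous φ ∧ ∀ x, p (φ x) = x.1.2 := by
  obtain ⟨G, hG, -, hG2⟩ := hp.2 (ULift.{w} {x : E' × B // p' x.1 = f x.2})
    (fun x => F' x.down.1.1) (fun z => H (z.1.down.1.2, z.2)) (by fun_prop) (by fun_prop)
    (by
      intro x
      change H (x.down.1.2, 0) = p (F' x.down.1.1)
      rw [hH0, hcomm₂, x.down.2])
  refine ⟨fun x => G (ULift.up x, 1), by fun_prop, fun x => ?_⟩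
  rw [← hG2]
  exact hH1 _

/-- Given fibrations `p : E → B`, `p' : E' → B'` (metric total spaces)
and a commutative diagram of maps `F : E → E'`, `F' : E' → E` over `f : B → B'`,
`f' : B' → B` with `f' ∘ f ≃ id_B`, one has `dsecat p ≤ dsecat p'`. -/
theorem dsecat_le_of_retract_up_to_homotopy {E B E' B' : Type} [MetricSpace E]
    [TopologicalSpace B] [MetricSpace E'] [TopologicalSpace B']
    (p : E → B) (p' : E' → B') (F : E → E') (F' : E' → E) (f : B → B') (f' : B' → B)
    (hp : IsHurewiczFibration p) (hp' : IsHurewiczFibration p')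
    (hF : Continuous F) (hF' : Continuous F') (hf : Continuous f) (hf' : Continuous f')
    (hcomm₁ : ∀ e, p' (F e) = f (p e)) (hcomm₂ : ∀ e', p (F' e') = f' (p' e'))
    (hhtpy : ∃ H : B × I → B, Continuous H ∧
      (∀ b, H (b, 0) = f' (f b)) ∧ (∀ b, H (b, 1) = b)) :
    dsecat p ≤ dsecat p' := by
  obtain ⟨H, hH, hH0, hH1⟩ := hhtpy
  obtain ⟨φ, hφ, hpφ⟩ := exists_transport p p' F' f f' hp hF' hcomm₂ H hH hH0 hH1
  classical
  letI : MeasurableSpace E := borel E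
  haveI : BorelSpace E := ⟨rfl⟩
  letI : MeasurableSpace E' := borel E'
  haveI : BorelSpace E' := ⟨rfl⟩
  refine sInf_le_sInf ?_
  rintro n ⟨m, rfl, s, hs, hsec⟩
  refine ⟨m, rfl, ?_⟩
  choose S hcard hfib hone using hsec
  have hmem : ∀ b, ∀ e ∈ S (f b), p' e = f b := fun b e he => hfib (f b) he
  have hone' : ∀ b, ((s (f b)).toMeasure : Measure E') (S (f b) : Set E') = 1 := by
    intro b
    rw [← ProbabilityMeasure.ennreal_coeFn_eq_coeFn_toMeasure, hone]
    rfl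
  have hne : ∀ b, ∃ e, e ∈ S (f b) := by
    intro b
    by_contra hcon
    push Not at hcon
    have h0 := hone' b
    rw [Finset.eq_empty_of_forall_notMem hcon] at h0
    simp at h0
  choose d hd using hne
  let g : B → E' → E := fun b e =>
    if h : e ∈ S (f b) then φ ⟨(e, b), hmem b e h⟩ else φ ⟨(d b, b), hmem b _ (hd b)⟩
  have hgS : ∀ b e (h : e ∈ S (f b)), g b e = φ ⟨(e, b), hmem b e h⟩ :=
    fun b e h => dif_pos h
  have hg : ∀ b, Measurable (g b) := by
    intro b
    refine (measurable_const (a := φ ⟨(d b, b), hmem b _ (hd b)⟩)).measurable_of_countable_ne ?_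
    refine ((S (f b)).finite_toSet.subset ?_).countable
    intro e he
    by_contra hcon
    have hcon' : e ∉ S (f b) := fun h => hcon (Finset.mem_coe.mpr h)
    refine he ?_
    simp only [g]
    rw [dif_neg hcon']
  refine ⟨_, continuous_push_family (fun b => s (f b)) (hs.comp hf) (fun b => S (f b)) hone'
    g hg ?_, ?_⟩
  · intro b₀ e₀ he₀ ε hε
    have h := Metric.tendsto_nhds.mp (hφ.tendsto ⟨(e₀, b₀), hmem b₀ e₀ he₀⟩) ε hε
    rw [nhds_subtype_eq_comap, Filter.eventually_comap] at h
    filter_upwards [h] with z hz hzS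
    rw [hgS _ _ hzS, hgS _ _ he₀]
    exact hz ⟨(z.1, z.2), hmem _ _ hzS⟩ rfl
  · intro b
    refine ⟨(S (f b)).image (g b), Finset.card_image_le.trans (hcard _), ?_, ?_⟩
    · intro y hy
      obtain ⟨e, he, rfl⟩ := Finset.mem_image.mp hy
      change p (g b e) = b
      rw [hgS _ _ he, hpφ]
    · have hle : ((s (f b)).toMeasure.map (hg b).aemeasurable : Measure E)
          (((S (f b)).image (g b) : Finset E) : Set E) = 1 := by
        rw [ProbabilityMeasure.toMeasure_map,
          Measure.map_apply (hg b) (Finset.measurableSet _)]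
        refine le_antisymm prob_le_one ?_
        rw [← hone' b]
        exact measure_mono fun e he => Finset.mem_coe.mpr (Finset.mem_image_of_mem _ he)
      rw [← ProbabilityMeasure.ennreal_coeFn_eq_coeFn_toMeasure] at hle
      exact_mod_cast hle
end

section
/- Let p: E → B and p': E' → B be fibrations with E and E' metric spaces that are fiberwise homotopy equivalent, i.e., there exist maps f: E → E' with p' ∘ f = p and g: E' → E with p ∘ g = p', together with homotopies from g ∘ f to id_E and from f ∘ g to id_{E'} that are fiberwise (respect p and p' at every time). Then for every integer r ≥ 2, dTC_r[p: E → B] = dTC_r[p': E' → B]. -/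
open MeasureTheory unitInterval Set

universe u v

/-- Any function is a.e.-measurable for a probability measure carried by a finite set. -/
theorem aemeasurable_of_finset_aux {X Y : Type*} [MeasurableSpace X] [MeasurableSingletonClass X]
    [MeasurableSpace Y] (μ : ProbabilityMeasure X) (F : X → Y) (S : Finset X)
    (hS : μ (S : Set X) = 1) :
    (∀ᵐ x ∂(μ : Measure X), x ∈ S) ∧ AEMeasurable F (μ : Measure X) := by
  have h1 : (μ : Measure X) (S : Set X) = 1 := by
    rw [← ProbabilityMeasure.ennreal_coeFn_eq_coeFn_toMeasure, hS]; simp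
  have h2 : ∀ᵐ x ∂(μ : Measure X), x ∈ S :=
    (prob_compl_eq_zero_iff S.measurableSet).2 h1
  refine ⟨h2, ?_⟩
  have h3 : (μ : Measure X).restrict (S : Set X) = μ := Measure.restrict_eq_self_of_ae_mem h2
  rw [← h3]
  exact aemeasurable_restrict_of_measurable_subtype S.measurableSet
    (measurable_of_countable _)

/-- Pushing forward a continuous family of finitely supported measures along a
continuous family of maps is continuous for the Lévy–Prokhorov metric. -/
theorem levyProkhorov_map_continuous_aux {A X Y : Type*} [TopologicalSpace A]
    [MetricSpace X] [MetricSpace Y] [MeasurableSpace X] [BorelSpace X] [MeasurableSpace Y]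
    [BorelSpace Y] (μ : A → LevyProkhorov (ProbabilityMeasure X)) (hμ : Continuous μ)
    (F : A → X → Y) (D : Set (A × X)) (hF : ContinuousOn (Function.uncurry F) D)
    (hs : ∀ a, ∃ S : Finset X, (∀ x ∈ S, (a, x) ∈ D) ∧ (μ a).toMeasure (S : Set X) = 1)
    (hm : ∀ a, AEMeasurable (F a) ((μ a).toMeasure : Measure X)) :
    Continuous fun a => LevyProkhorov.ofMeasure ((μ a).toMeasure.map (hm a)) := by
  rw [continuous_iff_continuousAt]
  intro a₀
  rw [ContinuousAt, Metric.tendsto_nhds]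
  intro ε' hε'
  obtain ⟨ε, hε, hεε'⟩ := exists_between hε'
  obtain ⟨S, hSD, hS⟩ := hs a₀
  have key : ∀ x ∈ S, ∀ᶠ δ in nhdsWithin (0 : ℝ) (Ioi 0), ∀ᶠ a in nhds a₀,
      ∀ y, dist y x < δ → (a, y) ∈ D → dist (F a y) (F a₀ x) < ε := by
    intro x hx
    have h1 := hF (a₀, x) (hSD x hx)
    rw [ContinuousWithinAt, Metric.tendsto_nhds] at h1
    have h2 := h1 ε hε
    rw [eventually_nhdsWithin_iff, nhds_prod_eq, Filter.eventually_prod_iff] at h2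
    obtain ⟨pa, hpa, pb, hpb, h⟩ := h2
    obtain ⟨d, hd, hd'⟩ := Metric.eventually_nhds_iff.1 hpb
    filter_upwards [Ioo_mem_nhdsGT hd] with δ hδ
    filter_upwards [hpa] with a ha y hy hyD
    exact h ha (hd' (hy.trans hδ.2)) hyD
  have key2 := (Filter.eventually_all_finset S).2 key
  obtain ⟨δ, hδ, hδ0, hδε⟩ := (key2.and (Ioo_mem_nhdsGT hε)).exists
  have hδ' := (Filter.eventually_all_finset S).2 hδ
  have hμ' := (Metric.tendsto_nhds.1 (hμ.tendsto a₀)) δ hδ0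
  filter_upwards [hδ', hμ'] with a ha haμ
  refine lt_of_le_of_lt ?_ hεε'
  rw [dist_comm, LevyProkhorov.dist_probabilityMeasure_def]
  refine levyProkhorovDist_le_of_forall_le _ _ hε.le ?_
  intro η T hη hT
  simp only [ProbabilityMeasure.toMeasure_map]
  rw [Measure.map_apply_of_aemeasurable (hm a₀) hT,
    Measure.map_apply_of_aemeasurable (hm a) Metric.isOpen_thickening.measurableSet]
  obtain ⟨hae, -⟩ := aemeasurable_of_finset_aux _ (F a₀) S hS
  obtain ⟨S', hSD', hS'⟩ := hs a
  obtain ⟨hae', -⟩ := aemeasurable_of_finset_aux _ (F a) S' hS'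
  have hW : ((S : Set X) ∩ F a₀ ⁻¹' T).Finite := S.finite_toSet.subset inter_subset_left
  have hlt : levyProkhorovEDist ((μ a₀).toMeasure : Measure X) ((μ a).toMeasure : Measure X)
      < ENNReal.ofReal δ := by
    rw [dist_comm, LevyProkhorov.dist_probabilityMeasure_def, levyProkhorovDist] at haμ
    exact (ENNReal.lt_ofReal_iff_toReal_lt (levyProkhorovEDist_ne_top _ _)).2 haμ
  calc ((μ a₀).toMeasure : Measure X) (F a₀ ⁻¹' T)
      ≤ ((μ a₀).toMeasure : Measure X) ((S : Set X) ∩ F a₀ ⁻¹' T) := by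
        apply measure_mono_ae
        filter_upwards [hae] with x hx hxT
        exact ⟨hx, hxT⟩
    _ ≤ ((μ a).toMeasure : Measure X) (Metric.thickening δ ((S : Set X) ∩ F a₀ ⁻¹' T))
          + ENNReal.ofReal δ := by
        have := left_measure_le_of_levyProkhorovEDist_lt hlt hW.measurableSet
        rwa [ENNReal.toReal_ofReal hδ0.le] at this
    _ ≤ _ := by
        gcongr ?_ + ?_
        · apply measure_mono_ae
          filter_upwards [hae'] with y hy hyT
          obtain ⟨x, hx, hxy⟩ := Metric.mem_thickening_iff.1 hyT
          exact Metric.mem_thickening_iff.2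
            ⟨F a₀ x, hx.2, (ha x hx.1 y hxy (hSD' y hy)).trans hη⟩
        · exact ENNReal.ofReal_le_ofReal (hδε.le.trans hη.le)

/-- A self-map of the interval that is constant near each `i/(r-1)`. -/
theorem exists_plateau_aux (r : ℕ) (hr : 2 ≤ r) :
    ∃ φ : I → I, Continuous φ ∧
      ∀ (t : I) (i : Fin r), |((r : ℝ) - 1) * (t : ℝ) - i| ≤ 1 / 4 → φ t = tDiv r i := by
  have hr' : (2 : ℝ) ≤ r := by exact_mod_cast hr
  refine ⟨fun t => projIcc (0 : ℝ) 1 zero_le_one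
    ((∑ k ∈ Finset.range (r - 1),
      max 0 (min 1 (2 * (((r : ℝ) - 1) * (t : ℝ) - k) - 1 / 2))) / ((r : ℝ) - 1)), ?_, ?_⟩
  · refine continuous_projIcc.comp ?_
    fun_prop
  · intro t i hti
    obtain ⟨h1, h2⟩ := abs_le.1 hti
    unfold tDiv
    refine congrArg (fun q : ℝ => projIcc (0 : ℝ) 1 zero_le_one (q / ((r : ℝ) - 1))) ?_
    have hi : (i : ℕ) ≤ r - 1 := by have := i.2; omega
    have : ∀ k ∈ Finset.range (r - 1),
        max 0 (min 1 (2 * (((r : ℝ) - 1) * (t : ℝ) - k) - 1 / 2)) =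
          if k < (i : ℕ) then (1 : ℝ) else 0 := by
      intro k _
      split_ifs with hk
      · have hk' : (k : ℝ) + 1 ≤ (i : ℕ) := by exact_mod_cast hk
        rw [min_eq_left (by linarith)]; simp
      · have hk' : ((i : ℕ) : ℝ) ≤ k := by exact_mod_cast not_lt.1 hk
        exact max_eq_left ((min_le_right _ _).trans (by linarith))
    rw [Finset.sum_congr rfl this, ← Finset.sum_filter]
    have h3 : (Finset.range (r - 1)).filter (fun k => k < (i : ℕ)) = Finset.range (i : ℕ) := by
      ext k; simp; omega
    rw [h3]; simp

theorem tDiv_val_aux (r : ℕ) (hr : 2 ≤ r) (i : Fin r) :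
    ((r : ℝ) - 1) * (tDiv r i : ℝ) = i := by
  have hr' : (2 : ℝ) ≤ r := by exact_mod_cast hr
  have hi : ((i : ℕ) : ℝ) + 1 ≤ r := by exact_mod_cast i.2
  unfold tDiv
  rw [projIcc_of_mem (x := (i : ℝ) / (r - 1)) zero_le_one
    ⟨div_nonneg (by positivity) (by linarith), (div_le_one (by linarith)).2 (by linarith)⟩]
  have : (r : ℝ) - 1 ≠ 0 := by linarith
  field_simp

/-- Gluing: correct `g ∘ γ'` by detours along the homotopy tracks of the points `x i`. -/
theorem exists_glue_aux {Z E E' : Type*} [TopologicalSpace Z] [TopologicalSpace E]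
    [TopologicalSpace E'] (r : ℕ) (hr : 2 ≤ r)
    (f : E → E') (g : E' → E) (hg : Continuous g)
    (H : E × I → E) (hH : Continuous H)
    (hH0 : ∀ e, H (e, 0) = g (f e)) (hH1 : ∀ e, H (e, 1) = e)
    (x : Z → Fin r → E) (hx : Continuous x) (γ : Z → C(I, E')) (hγ : Continuous γ)
    (hγx : ∀ z i, γ z (tDiv r i) = f (x z i)) :
    ∃ G : Z → C(I, E), Continuous G ∧ (∀ z i, G z (tDiv r i) = x z i) ∧
      ∀ z t, (∃ i s, G z t = H (x z i, s)) ∨ ∃ s, G z t = g (γ z s) := by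
  classical
  obtain ⟨φ, hφ, hφi⟩ := exists_plateau_aux r hr
  let c : Fin r → I → I := fun i t =>
    projIcc (0 : ℝ) 1 zero_le_one (1 - 4 * |((r : ℝ) - 1) * (t : ℝ) - i|)
  have hc : ∀ i, Continuous (c i) := fun i => continuous_projIcc.comp (by fun_prop)
  let P : I → Fin r → Prop := fun t i => |((r : ℝ) - 1) * (t : ℝ) - i| ≤ 1 / 4
  have huniq : ∀ t i j, P t i → P t j → i = j := by
    intro t i j hi hj
    obtain ⟨h1, h2⟩ := abs_le.1 hi
    obtain ⟨h3, h4⟩ := abs_le.1 hj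
    have h5 : ((i : ℕ) : ℝ) < (j : ℕ) + 1 := by linarith
    have h6 : ((j : ℕ) : ℝ) < (i : ℕ) + 1 := by linarith
    have h5' : (i : ℕ) < (j : ℕ) + 1 := by exact_mod_cast h5
    have h6' : (j : ℕ) < (i : ℕ) + 1 := by exact_mod_cast h6
    exact Fin.ext (by omega)
  let G₀ : Z × I → E := fun w =>
    if h : ∃ i, P w.2 i then H (x w.1 h.choose, c h.choose w.2) else g (γ w.1 (φ w.2))
  have hG1 : ∀ w i, P w.2 i → G₀ w = H (x w.1 i, c i w.2) := by
    intro w i hi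
    have h : ∃ i, P w.2 i := ⟨i, hi⟩
    have : h.choose = i := huniq _ _ _ h.choose_spec hi
    simp only [G₀, dif_pos h, this]
  have hG2 : ∀ w, (∀ i, (1 : ℝ) / 4 ≤ |((r : ℝ) - 1) * (w.2 : ℝ) - (i : Fin r)|) →
      G₀ w = g (γ w.1 (φ w.2)) := by
    intro w hw
    by_cases h : ∃ i, P w.2 i
    · obtain ⟨i, hi⟩ := h
      have he : |((r : ℝ) - 1) * (w.2 : ℝ) - i| = 1 / 4 := le_antisymm hi (hw i)
      have hc0 : c i w.2 = 0 := by
        simp only [c, he]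
        norm_num
      rw [hG1 w i hi, hc0, hH0, hφi _ i hi, hγx]
    · simp only [G₀, dif_neg h]
  have hev : Continuous fun w : Z × I => γ w.1 (φ w.2) := by
    have h1 : Continuous fun w : Z × I => (γ w.1, φ w.2) := by fun_prop
    exact ContinuousEval.continuous_eval.comp h1
  have hG₀ : Continuous G₀ := by
    let K : Option (Fin r) → Set (Z × I) := fun o => match o with
      | none => {w | ∀ i : Fin r, (1 : ℝ) / 4 ≤ |((r : ℝ) - 1) * (w.2 : ℝ) - i|}
      | some i => {w | |((r : ℝ) - 1) * (w.2 : ℝ) - i| ≤ 1 / 4}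
    refine (locallyFinite_of_finite K).continuous ?_ ?_ ?_
    · refine Set.eq_univ_of_forall fun w => ?_
      by_cases h : ∃ i, P w.2 i
      · obtain ⟨i, hi⟩ := h
        exact mem_iUnion.2 ⟨some i, hi⟩
      · push Not at h
        exact mem_iUnion.2 ⟨none, fun i => (not_le.1 (h i)).le⟩
    · rintro (_ | i)
      · simp only [K, ofPred_forall]
        exact isClosed_iInter fun i => isClosed_le (by fun_prop) (by fun_prop)
      · exact isClosed_le (by fun_prop) (by fun_prop)
    · rintro (_ | i)
      · exact (hg.comp hev).continuousOn.congr fun w hw => hG2 w hw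
      · have h1 : Continuous fun w : Z × I => H (x w.1 i, c i w.2) := by
          have := hc i
          fun_prop
        exact h1.continuousOn.congr fun w hw => hG1 w i hw
  refine ⟨(⟨G₀, hG₀⟩ : C(Z × I, E)).curry, ContinuousMap.continuous _, ?_, ?_⟩
  · intro z i
    have hP : P (tDiv r i) i := by
      simp only [P, tDiv_val_aux r hr i]; norm_num
    have hc1 : c i (tDiv r i) = 1 := by
      simp only [c, tDiv_val_aux r hr i]; norm_num
    change G₀ (z, tDiv r i) = x z i
    rw [hG1 _ i hP]
    change H (x z i, c i (tDiv r i)) = _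
    rw [hc1, hH1]
  · intro z t
    change (∃ i s, G₀ (z, t) = _) ∨ ∃ s, G₀ (z, t) = _
    by_cases h : ∃ i, P t i
    · obtain ⟨i, hi⟩ := h
      exact Or.inl ⟨i, _, hG1 (z, t) i hi⟩
    · refine Or.inr ⟨φ t, hG2 (z, t) ?_⟩
      push Not at h
      exact fun i => (not_le.1 (h i)).le

/-- Transfer of distributional sections along a fiberwise family of maps. -/
theorem dsecat_transfer_aux {X X' : Type u} {A A' : Type v} [MetricSpace X] [MetricSpace X']
    [TopologicalSpace A] [TopologicalSpace A'] (q : X → A) (q' : X' → A')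
    (fr : A → A') (hfr : Continuous fr) (F : A → X' → X)
    (hF : ContinuousOn (Function.uncurry F) {w : A × X' | q' w.2 = fr w.1})
    (hq : ∀ x γ, q' γ = fr x → q (F x γ) = x)
    [MeasurableSpace X] [BorelSpace X] [MeasurableSpace X'] [BorelSpace X'] (m : ℕ)
    (s : A' → LevyProkhorov (ProbabilityMeasure X')) (hs : Continuous s)
    (hsupp : ∀ b, ∃ S : Finset X', S.card ≤ m + 1 ∧ (↑S : Set X') ⊆ q' ⁻¹' {b} ∧
      (s b).toMeasure (↑S : Set X') = 1) :
    ∃ s : A → LevyProkhorov (ProbabilityMeasure X), Continuous s ∧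
      ∀ b, ∃ S : Finset X, S.card ≤ m + 1 ∧ (↑S : Set X) ⊆ q ⁻¹' {b} ∧
        (s b).toMeasure (↑S : Set X) = 1 := by
  classical
  have hm : ∀ x, AEMeasurable (F x) ((s (fr x)).toMeasure : Measure X') := by
    intro x
    obtain ⟨S, -, -, h3⟩ := hsupp (fr x)
    exact (aemeasurable_of_finset_aux _ (F x) S h3).2
  refine ⟨fun x => LevyProkhorov.ofMeasure ((s (fr x)).toMeasure.map (hm x)), ?_, ?_⟩
  · refine levyProkhorov_map_continuous_aux (fun x => s (fr x)) (hs.comp hfr) F _ hF ?_ hm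
    intro x
    obtain ⟨S, -, h2, h3⟩ := hsupp (fr x)
    exact ⟨S, fun γ hγ => h2 hγ, h3⟩
  · intro x
    obtain ⟨S, h1, h2, h3⟩ := hsupp (fr x)
    refine ⟨S.image (F x), Finset.card_image_le.trans h1, ?_, ?_⟩
    · intro y hy
      obtain ⟨γ, hγ, rfl⟩ := Finset.mem_image.1 (Finset.mem_coe.1 hy)
      exact hq x γ (h2 hγ)
    · change ((s (fr x)).toMeasure.map (hm x)) _ = 1
      rw [ProbabilityMeasure.map_apply_of_aemeasurable _ _ (Finset.measurableSet _)]
      refine le_antisymm (ProbabilityMeasure.apply_le_one _ _) ?_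
      rw [← h3]
      refine ProbabilityMeasure.apply_mono _ ?_
      intro γ hγ
      exact Finset.mem_coe.2 (Finset.mem_image_of_mem _ hγ)

theorem dsecat_le_aux {X X' : Type u} {A A' : Type v} [MetricSpace X] [MetricSpace X']
    [TopologicalSpace A] [TopologicalSpace A'] (q : X → A) (q' : X' → A')
    (fr : A → A') (hfr : Continuous fr) (F : A → X' → X)
    (hF : ContinuousOn (Function.uncurry F) {w : A × X' | q' w.2 = fr w.1})
    (hq : ∀ x γ, q' γ = fr x → q (F x γ) = x) : dsecat q ≤ dsecat q' := by
  unfold dsecat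
  apply sInf_le_sInf
  rintro n ⟨m, rfl, s, hs, hsupp⟩
  exact ⟨m, rfl, @dsecat_transfer_aux X X' A A' _ _ _ _ q q' fr hfr F hF hq
    (borel X) (@BorelSpace.mk X _ (borel X) rfl) (borel X') (@BorelSpace.mk X' _ (borel X') rfl) m s hs hsupp⟩

/-- One inequality: a fiberwise homotopy retract has smaller complexity. -/
theorem dTCfib_le_aux {E E' B : Type} [MetricSpace E] [MetricSpace E']
    [TopologicalSpace B] (p : E → B) (p' : E' → B)
    (f : E → E') (g : E' → E) (hf : Continuous f) (hg : Continuous g)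
    (hfp : ∀ e, p' (f e) = p e) (hgp : ∀ e', p (g e') = p' e')
    (H : E × I → E) (hH : Continuous H)
    (hH0 : ∀ e, H (e, 0) = g (f e)) (hH1 : ∀ e, H (e, 1) = e)
    (hHfib : ∀ e t, p (H (e, t)) = p e)
    (r : ℕ) (hr : 2 ≤ r) :
    dTCfib p r ≤ dTCfib p' r := by
  classical
  let i0 : Fin r := ⟨0, by omega⟩
  let fr : FibredProd p r → FibredProd p' r := fun x =>
    ⟨fun i => f (x.1 i), fun i j => by rw [hfp, hfp]; exact x.2 i j⟩
  have hfr : Continuous fr :=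
    Continuous.subtype_mk (by
      have : Continuous fun x : FibredProd p r => x.1 := continuous_subtype_val
      exact continuous_pi fun i => hf.comp ((continuous_apply i).comp this)) _
  let D : Set (FibredProd p r × FibredPaths p') := {w | parmEval p' r w.2 = fr w.1}
  obtain ⟨G, hGc, hGx, hGt⟩ := exists_glue_aux (Z := D) r hr f g hg H hH hH0 hH1
    (fun z => z.1.1.1)
    (continuous_subtype_val.comp (continuous_fst.comp continuous_subtype_val))
    (fun z => z.1.2.1)
    (continuous_subtype_val.comp (continuous_snd.comp continuous_subtype_val))
    (fun z i => congrFun (congrArg Subtype.val z.2) i)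
  have hfib : ∀ (z : D) (t : I), p (G z t) = p (z.1.1.1 i0) := by
    intro z t
    rcases hGt z t with ⟨i, u, h⟩ | ⟨u, h⟩
    · rw [h, hHfib]; exact z.1.1.2 i i0
    · rw [h, hgp]
      obtain ⟨b, hb⟩ := z.1.2.2
      rw [hb u, ← hb (tDiv r i0), ← hfp]
      exact congrArg p' (congrFun (congrArg Subtype.val z.2) i0)
  let Φ : D → FibredPaths p := fun z => ⟨G z, _, hfib z⟩
  have hΦ : Continuous Φ := Continuous.subtype_mk hGc _
  let F : FibredProd p r → FibredPaths p' → FibredPaths p := fun x γ =>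
    if h : (x, γ) ∈ D then Φ ⟨(x, γ), h⟩ else ⟨ContinuousMap.const I (x.1 i0), p (x.1 i0), fun _ => rfl⟩
  have hFD : ∀ z : D, F z.1.1 z.1.2 = Φ z := by
    intro z
    exact dif_pos z.2
  have hFc : ContinuousOn (Function.uncurry F) D := by
    rw [continuousOn_iff_continuous_domRestrict]
    have : D.domRestrict (Function.uncurry F) = Φ := funext hFD
    rw [this]; exact hΦ
  unfold dTCfib
  refine dsecat_le_aux (parmEval p r) (parmEval p' r) fr hfr F hFc ?_
  intro x γ hγ
  have h4 : F x γ = Φ ⟨(x, γ), hγ⟩ := hFD ⟨(x, γ), hγ⟩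
  rw [h4]
  exact Subtype.ext (funext fun i => hGx ⟨(x, γ), hγ⟩ i)

/-- Fiberwise homotopy equivalent fibrations (with metric total spaces)
over the same base have the same `r`-th sequential parametrized distributional
complexity, for every `r ≥ 2`. -/
theorem dTCfib_eq_of_fiberwiseHomotopyEquiv {E E' B : Type} [MetricSpace E] [MetricSpace E']
    [TopologicalSpace B] (p : E → B) (p' : E' → B)
    (hp : IsHurewiczFibration p) (hp' : IsHurewiczFibration p')
    (f : E → E') (g : E' → E) (hf : Continuous f) (hg : Continuous g)
    (hfp : ∀ e, p' (f e) = p e) (hgp : ∀ e', p (g e') = p' e')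
    (H : E × I → E) (hH : Continuous H)
    (hH0 : ∀ e, H (e, 0) = g (f e)) (hH1 : ∀ e, H (e, 1) = e)
    (hHfib : ∀ e t, p (H (e, t)) = p e)
    (H' : E' × I → E') (hH' : Continuous H')
    (hH'0 : ∀ e', H' (e', 0) = f (g e')) (hH'1 : ∀ e', H' (e', 1) = e')
    (hH'fib : ∀ e' t, p' (H' (e', t)) = p' e')
    (r : ℕ) (hr : 2 ≤ r) :
    dTCfib p r = dTCfib p' r := by
  exact le_antisymm
    (dTCfib_le_aux p p' f g hf hg hfp hgp H hH hH0 hH1 hHfib r hr)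
    (dTCfib_le_aux p' p g f hg hf hgp hfp H' hH' hH'0 hH'1 hH'fib r hr)
end

section
/- Let p: E → B be a fibration with E a metric space, let B' ⊆ B, let E' = p^{-1}(B'), and let p': E' → B' be the restricted fibration. Then for every integer r ≥ 2, dTC_r[p': E' → B'] ≤ dTC_r[p: E → B]. In particular, taking B' = {b} a single point with fiber F = p^{-1}(b), one has dTC_r(F) ≤ dTC_r[p: E → B]. -/
open MeasureTheory unitInterval Set

universe u v

section Helpers

open Metric

/-- A set is null measurable for a measure concentrated on a finite set. -/
theorem aux_nullMeasurable {E : Type*} [MetricSpace E] [MeasurableSpace E] [BorelSpace E]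
    (μ : Measure E) (S : Finset E) (hS : ∀ᵐ x ∂μ, x ∈ S) (A : Set E) :
    NullMeasurableSet A μ := by
  have h : (A ∩ (S : Set E) : Set E) =ᵐ[μ] A := by
    filter_upwards [hS] with x hx
    apply propext
    change (x ∈ A ∧ x ∈ (S : Set E)) ↔ x ∈ A
    simp [hx]
  exact ((S.finite_toSet.inter_of_right A).measurableSet.nullMeasurableSet).congr h

theorem aux_comap_apply {E' E : Type*} [MetricSpace E] [MeasurableSpace E] [BorelSpace E]
    [MeasurableSpace E'] (j : E' → E) (hj : Function.Injective j)
    (μ : Measure E) (S : Finset E) (hS : ∀ᵐ x ∂μ, x ∈ S) {A : Set E'} (hA : MeasurableSet A) :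
    μ.comap j A = μ (j '' A) :=
  Measure.comap_apply₀ j μ hj (fun _ _ => aux_nullMeasurable μ S hS _) hA.nullMeasurableSet

theorem aux_levy {E' E : Type*} [MetricSpace E] [MeasurableSpace E] [BorelSpace E]
    [MetricSpace E'] [MeasurableSpace E'] [BorelSpace E'] (j : E' → E) (hj : Isometry j)
    (μ ν : Measure E) (S T : Finset E) (hS : ∀ᵐ x ∂μ, x ∈ S) (hT : ∀ᵐ x ∂ν, x ∈ T)
    (hTj : ∀ x ∈ T, x ∈ range j) (c : ENNReal)
    (hc : levyProkhorovEDist μ ν < c) {A : Set E'} (hA : MeasurableSet A) :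
    μ.comap j A ≤ ν.comap j (thickening c.toReal A) + c := by
  rw [aux_comap_apply j hj.injective μ S hS hA,
    aux_comap_apply j hj.injective ν T hT isOpen_thickening.measurableSet]
  have h1 : μ (j '' A) ≤ μ (j '' A ∩ (S : Set E)) := by
    apply measure_mono_ae
    filter_upwards [hS] with x hx hxA
    exact ⟨hxA, hx⟩
  have h2 := left_measure_le_of_levyProkhorovEDist_lt hc
    (S.finite_toSet.inter_of_right (j '' A)).measurableSet
  refine h1.trans (h2.trans (add_le_add ?_ le_rfl))
  apply measure_mono_ae
  filter_upwards [hT] with x hx hxA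
  obtain ⟨y, rfl⟩ := hTj x hx
  obtain ⟨_, ⟨⟨z, hz, rfl⟩, _⟩, hd⟩ := mem_thickening_iff.1 hxA
  refine ⟨y, mem_thickening_iff.2 ⟨z, hz, ?_⟩, rfl⟩
  rwa [hj.dist_eq] at hd

theorem aux_dsecat_le {E' : Type*} {E : Type*} {B' : Type*} {B : Type*} [MetricSpace E']
    [MetricSpace E] [TopologicalSpace B'] [TopologicalSpace B] (p' : E' → B') (p : E → B)
    (j : E' → E) (hj : Isometry j) (f : B' → B) (hf : Continuous f)
    (h : ∀ b γ, p γ = f b → ∃ γ', j γ' = γ ∧ p' γ' = b) :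
    dsecat p' ≤ dsecat p := by
  classical
  let _ : MeasurableSpace E := borel E
  have : BorelSpace E := ⟨rfl⟩
  let _ : MeasurableSpace E' := borel E'
  have : BorelSpace E' := ⟨rfl⟩
  refine sInf_le_sInf ?_
  rintro n ⟨m, rfl, s, hs, hS⟩
  refine ⟨m, rfl, ?_⟩
  choose S hcard hsub hmeas using fun b' => hS (f b')
  have hae : ∀ b', ∀ᵐ x ∂((s (f b')).toMeasure : Measure E), x ∈ S b' := by
    intro b'
    have h1 : ((s (f b')).toMeasure : Measure E) (S b' : Set E) = 1 := by
      rw [← ProbabilityMeasure.ennreal_coeFn_eq_coeFn_toMeasure, hmeas b']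
      rfl
    exact (mem_ae_iff_prob_eq_one (S b').measurableSet).2 h1
  have hran : ∀ b', ∀ x ∈ S b', x ∈ range j := by
    intro b' x hx
    obtain ⟨y, hy, _⟩ := h b' x (hsub b' hx)
    exact ⟨y, hy⟩
  have hprob : ∀ b', IsProbabilityMeasure
      (((s (f b')).toMeasure : Measure E).comap j) := by
    intro b'
    constructor
    rw [aux_comap_apply j hj.injective _ (S b') (hae b') MeasurableSet.univ, image_univ]
    refine le_antisymm prob_le_one ?_
    rw [← (mem_ae_iff_prob_eq_one (S b').measurableSet).1 (hae b')]
    exact measure_mono (fun x hx => hran b' x hx)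
  let s' : B' → LevyProkhorov (ProbabilityMeasure E') :=
    fun b' => LevyProkhorov.ofMeasure (α := ProbabilityMeasure E') ⟨_, hprob b'⟩
  refine ⟨s', ?_, ?_⟩
  · have key : ∀ a b : B', edist (s' a) (s' b) ≤ edist (s (f a)) (s (f b)) := by
      intro a b
      rw [LevyProkhorov.edist_probabilityMeasure_def, LevyProkhorov.edist_probabilityMeasure_def]
      apply levyProkhorovEDist_le_of_forall
      intro ε A hε _ hA
      refine ⟨aux_levy j hj _ _ (S a) (S b) (hae a) (hae b) (hran b) ε hε hA,
        aux_levy j hj _ _ (S b) (S a) (hae b) (hae a) (hran a) ε ?_ hA⟩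
      rwa [levyProkhorovEDist_comm]
    rw [continuous_iff_continuousAt]
    intro b
    have h0 := (hs.comp hf).continuousAt (x := b)
    rw [ContinuousAt, tendsto_iff_edist_tendsto_0] at h0 ⊢
    exact tendsto_of_tendsto_of_tendsto_of_le_of_le tendsto_const_nhds h0
      (fun _ => zero_le) (fun a => key a b)
  · intro b'
    refine ⟨(S b').preimage j hj.injective.injOn, ?_, ?_, ?_⟩
    · refine le_trans ?_ (hcard b')
      rw [← Finset.card_image_of_injective _ hj.injective]
      apply Finset.card_le_card
      intro x hx
      obtain ⟨y, hy, rfl⟩ := Finset.mem_image.1 hx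
      exact Finset.mem_preimage.1 hy
    · intro y hy
      have hy' : j y ∈ S b' := by simpa using hy
      obtain ⟨z, hz, hz'⟩ := h b' (j y) (hsub b' hy')
      rw [hj.injective hz] at hz'
      exact hz'
    · have h1 : ((s (f b')).toMeasure : Measure E).comap j
          ((S b').preimage j hj.injective.injOn : Set E') = 1 := by
        rw [aux_comap_apply j hj.injective _ (S b') (hae b') (Finset.measurableSet _)]
        rw [← (mem_ae_iff_prob_eq_one (S b').measurableSet).1 (hae b')]
        congr 1
        ext x
        constructor
        · rintro ⟨y, hy, rfl⟩
          simpa using hy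
        · intro hx
          obtain ⟨y, rfl⟩ := hran b' x hx
          exact ⟨y, by simpa using hx, rfl⟩
      rw [← ENNReal.coe_inj, ProbabilityMeasure.ennreal_coeFn_eq_coeFn_toMeasure]
      exact h1

/-- Postcomposition with an inclusion of a subspace is an isometry on path spaces. -/
theorem aux_isometry_comp {E : Type*} [MetricSpace E] (A : Set E) :
    Isometry (fun γ : C(I, A) => (⟨fun t => (γ t : E), by fun_prop⟩ : C(I, E))) := by
  apply Isometry.of_dist_eq
  intro γ δ
  apply le_antisymm
  · rw [ContinuousMap.dist_le dist_nonneg]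
    intro t
    exact ContinuousMap.dist_apply_le_dist (f := γ) (g := δ) t
  · rw [ContinuousMap.dist_le dist_nonneg]
    intro t
    exact ContinuousMap.dist_apply_le_dist
      (f := (⟨fun t => (γ t : E), by fun_prop⟩ : C(I, E)))
      (g := (⟨fun t => (δ t : E), by fun_prop⟩ : C(I, E))) t

end Helpers

/-- For a fibration `p : E → B` with metric total space, a subset
`B' ⊆ B` with `E' = p⁻¹(B')`, and the restricted fibration `p' : E' → B'`, one has
`dTC_r[p' : E' → B'] ≤ dTC_r[p : E → B]` for every `r ≥ 2`; in particular, for the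
fiber `F = p⁻¹(b)` over any point `b ∈ B`, `dTC_r(F) ≤ dTC_r[p : E → B]`. -/
theorem dTCfib_restrict_le {E B : Type} [MetricSpace E] [TopologicalSpace B]
    (p : E → B) (hp : IsHurewiczFibration p) (B' : Set B) (r : ℕ) (hr : 2 ≤ r) :
    dTCfib (fun x : (p ⁻¹' B') => (⟨p x.1, x.2⟩ : B')) r ≤ dTCfib p r ∧
    ∀ b : B, dTC (p ⁻¹' {b} : Set E) r ≤ dTCfib p r := by
  have hi : 0 < r := by omega
  constructor
  · refine aux_dsecat_le _ _
      (fun γ => ⟨⟨fun t => (γ.1 t : E), by fun_prop⟩, ?_⟩) ?_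
      (fun x => ⟨fun i => (x.1 i : E), fun i j => congrArg Subtype.val (x.2 i j)⟩) ?_ ?_
    · obtain ⟨b, hb⟩ := γ.2
      exact ⟨b, fun t => congrArg Subtype.val (hb t)⟩
    · intro γ δ
      exact aux_isometry_comp (p ⁻¹' B') γ.1 δ.1
    · refine Continuous.subtype_mk ?_ _
      refine continuous_pi fun i => ?_
      exact continuous_subtype_val.comp ((continuous_apply i).comp continuous_subtype_val)
    · rintro x ⟨γ, b, hb⟩ hγ
      have hx : ∀ i, γ (tDiv r i) = x.1 i := fun i => congrFun (congrArg Subtype.val hγ) i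
      have hbB : b ∈ B' := by
        rw [← hb (tDiv r ⟨0, hi⟩), hx]
        exact (x.1 ⟨0, hi⟩).2
      refine ⟨⟨⟨fun t => ⟨γ t, by rw [mem_preimage, hb]; exact hbB⟩, by fun_prop⟩,
        ⟨b, hbB⟩, fun t => Subtype.ext (hb t)⟩, rfl, ?_⟩
      apply Subtype.ext
      funext i
      exact Subtype.ext (hx i)
  · intro b
    refine aux_dsecat_le _ _
      (fun γ => ⟨⟨fun t => (γ t : E), by fun_prop⟩, b, fun t => (γ t).2⟩) ?_
      (fun x => ⟨fun i => (x i : E), fun i j => (x i).2.trans (x j).2.symm⟩) ?_ ?_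
    · intro γ δ
      exact aux_isometry_comp (p ⁻¹' {b}) γ δ
    · refine Continuous.subtype_mk ?_ _
      exact continuous_pi fun i => continuous_subtype_val.comp (continuous_apply i)
    · rintro x ⟨γ, b', hb⟩ hγ
      have hx : ∀ i, γ (tDiv r i) = x i := fun i => congrFun (congrArg Subtype.val hγ) i
      have hbB : b' = b := by
        rw [← hb (tDiv r ⟨0, hi⟩), hx]
        exact (x ⟨0, hi⟩).2
      refine ⟨⟨fun t => ⟨γ t, by rw [mem_preimage, hb]; exact hbB⟩, by fun_prop⟩, rfl, ?_⟩
      funext i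
      exact Subtype.ext (hx i)
end

section
/- Let p: E → B be a fibration with E a metric space, let r ≥ 2 and n ≥ 1 be integers, and let δ_{n!}: E^r_B → SP^{n!}(E^r_B) be the diagonal embedding and Δ_r: E → E^r_B the diagonal map. If dTC_r[p: E → B] < n, then there exist subsets A_1, A_2, …, A_n of E^r_B covering E^r_B such that each A_i deforms, inside SP^{n!}(E^r_B), to the diagonal Δ_r(E) ⊆ E^r_B ⊆ SP^{n!}(E^r_B); that is, for each i there is a homotopy H_i: A_i × [0,1] → SP^{n!}(E^r_B) with H_i(a, 0) = δ_{n!}(a) and H_i(a, 1) ∈ δ_{n!}(Δ_r(E)) for all a ∈ A_i. -/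
open MeasureTheory unitInterval Set

universe u v

/-- Tuples up to permutation: the defining setoid of the symmetric product. -/
def spSetoid (X : Type*) (k : ℕ) : Setoid (Fin k → X) where
  r x y := ∃ sg : Equiv.Perm (Fin k), x ∘ sg = y
  iseqv := by
    refine ⟨fun x => ⟨Equiv.refl _, rfl⟩, ?_, ?_⟩
    · rintro x y ⟨sg, rfl⟩
      exact ⟨sg.symm, by funext i; simp⟩
    · rintro x y z ⟨sg, rfl⟩ ⟨tu, rfl⟩
      exact ⟨tu.trans sg, rfl⟩

/-- The `k`-fold symmetric product `SP^k(X) = X^k / Σ_k`, with the quotient topology. -/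
def SymProd (X : Type*) (k : ℕ) : Type _ := Quotient (spSetoid X k)

instance (X : Type*) [TopologicalSpace X] (k : ℕ) : TopologicalSpace (SymProd X k) :=
  inferInstanceAs (TopologicalSpace (Quotient (spSetoid X k)))

/-- The diagonal embedding `X → SP^k(X)`. -/
def spDiag {X : Type*} (k : ℕ) (x : X) : SymProd X k :=
  Quotient.mk (spSetoid X k) (fun _ => x)

/-- The diagonal map `Δ_r : E → E^r_B`. -/
def fibDiag {E B : Type} [TopologicalSpace E] [TopologicalSpace B] (p : E → B) (r : ℕ) :
    E → FibredProd p r :=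
  fun e => ⟨fun _ => e, fun _ _ => rfl⟩

open Topology Filter

lemma aux_matching {X Y : Type*} [TopologicalSpace X] [MetricSpace Y] [MeasurableSpace Y]
    [BorelSpace Y] (s : X → LevyProkhorov (ProbabilityMeasure Y)) (hs : Continuous s)
    (n : ℕ) (Q : X → Set Y)
    (hS : ∀ x, ∃ S : Finset Y, S.card ≤ n ∧ (↑S : Set Y) ⊆ Q x ∧
      (s x).toMeasure (↑S : Set Y) = 1) :
    ∃ T : X → Finset Y, (∀ x, (T x).Nonempty ∧ (T x).card ≤ n ∧ (↑(T x) : Set Y) ⊆ Q x) ∧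
      ∀ x0 : X, ∀ ε > 0, ∀ᶠ x in 𝓝 x0, (T x).card = (T x0).card →
        ∃ f : T x0 ≃ T x, ∀ y, dist (f y : Y) (y : Y) < ε := by
  classical
  choose S hcard hQ hmass using hS
  let μ : X → Measure Y := fun x => ((s x).toMeasure : Measure Y)
  have hprob : ∀ x, IsProbabilityMeasure (μ x) := fun x => inferInstance
  have hmass' : ∀ x, μ x (S x : Set Y) = 1 := by
    intro x
    have := hmass x
    simp only [μ]
    rw [← ProbabilityMeasure.ennreal_coeFn_eq_coeFn_toMeasure, this]; rfl
  let T : X → Finset Y := fun x => (S x).filter (fun y => μ x {y} ≠ 0)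
  have hTc : ∀ x, μ x (T x : Set Y)ᶜ = 0 := by
    intro x
    have h1 : μ x (S x : Set Y)ᶜ = 0 :=
      (prob_compl_eq_zero_iff (S x).measurableSet).2 (hmass' x)
    have h2 : μ x (⋃ y ∈ (((S x).filter (fun y => μ x {y} = 0) : Finset Y) : Set Y), {y}) = 0 := by
      rw [measure_biUnion_null_iff (Finset.countable_toSet _)]
      intro y hy
      exact (Finset.mem_filter.1 hy).2
    refine measure_mono_null ?_ (measure_union_null h1 h2)
    intro y hy
    by_cases hyS : y ∈ S x
    · right
      simp only [mem_compl_iff, Finset.mem_coe, T, Finset.mem_filter, not_and, not_not] at hy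
      simp [hyS, hy hyS]
    · left; simpa using hyS
  have hmeet : ∀ x (U : Set Y), μ x U ≠ 0 → ∃ y ∈ T x, y ∈ U := by
    intro x U hU
    by_contra! h
    exact hU (measure_mono_null (fun y hy hyT => h y hyT hy) (hTc x))
  refine ⟨T, fun x => ⟨?_, ?_, ?_⟩, ?_⟩
  · obtain ⟨y, hy, -⟩ := hmeet x univ (by simp)
    exact ⟨y, hy⟩
  · exact (Finset.card_filter_le _ _).trans (hcard x)
  · intro y hy
    exact hQ x (Finset.mem_filter.1 hy).1
  · intro x0 ε hε
    -- separation
    have hsep : ∃ d > 0, ∀ y ∈ T x0, ∀ z ∈ T x0, y ≠ z → d ≤ dist y z := by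
      by_cases hne : (T x0).offDiag.Nonempty
      · obtain ⟨w, hw, hmin⟩ := Finset.exists_min_image _ (fun w : Y × Y => dist w.1 w.2) hne
        refine ⟨dist w.1 w.2, dist_pos.2 (Finset.mem_offDiag.1 hw).2.2, fun y hy z hz hyz => ?_⟩
        exact hmin (y, z) (Finset.mem_offDiag.2 ⟨hy, hz, hyz⟩)
      · refine ⟨1, one_pos, fun y hy z hz hyz => (hne ⟨(y, z), ?_⟩).elim⟩
        exact Finset.mem_offDiag.2 ⟨hy, hz, hyz⟩
    have hmin : ∃ m > (0 : ℝ), ∀ y ∈ T x0, m ≤ (μ x0 {y}).toReal := by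
      by_cases hne : (T x0).Nonempty
      · obtain ⟨w, hw, hmin⟩ := Finset.exists_min_image _ (fun y => (μ x0 {y}).toReal) hne
        refine ⟨_, ENNReal.toReal_pos (Finset.mem_filter.1 hw).2 (measure_ne_top _ _), hmin⟩
      · exact ⟨1, one_pos, fun y hy => (hne ⟨y, hy⟩).elim⟩
    obtain ⟨d, hd, hsep⟩ := hsep
    obtain ⟨m, hm, hmin⟩ := hmin
    obtain ⟨δ, hδ, hδ'⟩ : ∃ δ > 0, δ < min ε (min (d / 2) m) :=
      exists_between (lt_min hε (lt_min (half_pos hd) hm))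
    simp only [lt_min_iff] at hδ'
    obtain ⟨h1, h2, h3⟩ := hδ'
    have hev : ∀ᶠ x in 𝓝 x0, edist (s x0) (s x) < ENNReal.ofReal δ := by
      have := (Metric.continuous_iff'.1 hs x0 δ hδ)
      filter_upwards [this] with x hx
      rw [edist_comm, edist_dist]
      exact (ENNReal.ofReal_lt_ofReal_iff hδ).2 hx
    filter_upwards [hev] with x hx hc
    have hlp : levyProkhorovEDist (μ x0) (μ x) < ENNReal.ofReal δ := hx
    have hex : ∀ y : T x0, ∃ z : T x, dist (z : Y) (y : Y) < δ := by
      rintro ⟨y, hy⟩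
      have hle := left_measure_le_of_levyProkhorovEDist_lt hlp (measurableSet_singleton y)
      rw [ENNReal.toReal_ofReal hδ.le, Metric.thickening_singleton] at hle
      have hpos : μ x (Metric.ball y δ) ≠ 0 := by
        intro h0
        rw [h0, zero_add] at hle
        have := ENNReal.toReal_mono ENNReal.ofReal_ne_top hle
        rw [ENNReal.toReal_ofReal hδ.le] at this
        linarith [hmin y hy]
      obtain ⟨z, hz, hzb⟩ := hmeet x _ hpos
      exact ⟨⟨z, hz⟩, hzb⟩
    choose f hf using hex
    have hinj : Function.Injective f := by
      intro y z hyz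
      by_contra hne
      have := hsep y y.2 z z.2 (fun h => hne (Subtype.ext h))
      have h4 := hf y
      have h5 := hf z
      rw [hyz, dist_comm] at h4
      linarith [dist_triangle (y : Y) (f z) z]
    have hbij : Function.Bijective f :=
      (Fintype.bijective_iff_injective_and_card f).2 ⟨hinj, by simp [hc]⟩
    exact ⟨Equiv.ofBijective f hbij, fun y => (hf y).trans h1⟩

lemma aux_dsecat {Y : Type u} {X : Type v} [MetricSpace Y] [TopologicalSpace X]
    (q : Y → X) (n : ℕ) (hlt : dsecat q < (n : ℕ∞)) :
    ∃ T : X → Finset Y,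
      (∀ x, (T x).Nonempty ∧ (T x).card ≤ n ∧ (↑(T x) : Set Y) ⊆ q ⁻¹' {x}) ∧
      ∀ x0 : X, ∀ ε > 0, ∀ᶠ x in 𝓝 x0, (T x).card = (T x0).card →
        ∃ f : T x0 ≃ T x, ∀ y, dist (f y : Y) (y : Y) < ε := by
  unfold dsecat at hlt
  let : MeasurableSpace Y := borel Y
  have : BorelSpace Y := ⟨rfl⟩
  obtain ⟨_, ⟨m, rfl, s, hs, hS⟩, hmn⟩ := sInf_lt_iff.1 hlt
  have hmn' : m < n := by exact_mod_cast hmn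
  refine aux_matching s hs n (fun b => q ⁻¹' {b}) fun b => ?_
  obtain ⟨S, h1, h2⟩ := hS b
  exact ⟨S, by omega, h2⟩

lemma aux_homotopy {X Y Z : Type*} [TopologicalSpace X] [MetricSpace Y] [TopologicalSpace Z]
    (T : X → Finset Y)
    (hT : ∀ x0 : X, ∀ ε > 0, ∀ᶠ x in 𝓝 x0, (T x).card = (T x0).card →
        ∃ f : T x0 ≃ T x, ∀ y, dist (f y : Y) (y : Y) < ε)
    (F : Y × I → Z) (hF : Continuous F) (i N : ℕ) (hi : i ∣ N) :
    ∃ (e : ∀ x : {x | (T x).card = i}, Fin N → T x.1),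
      Continuous (fun w : {x | (T x).card = i} × I =>
        (Quotient.mk (spSetoid Z N) (fun k => F (e w.1 k, w.2)) : SymProd Z N)) := by
  obtain ⟨q, rfl⟩ := hi
  let c : Fin (i * q) ≃ Fin i × Fin q := finProdFinEquiv.symm
  let e0 : ∀ x : {x | (T x).card = i}, Fin i ≃ T x.1 := fun x =>
    ((T x.1).equivFinOfCardEq x.2).symm
  refine ⟨fun x k => e0 x (c k).1, ?_⟩
  rw [continuous_iff_continuousAt]
  rintro ⟨x0, t0⟩
  let v : Fin (i * q) → Z := fun k => F (e0 x0 (c k).1, t0)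
  have hmk : Continuous (fun v : Fin (i * q) → Z =>
      (Quotient.mk (spSetoid Z (i * q)) v : SymProd Z (i * q))) := continuous_quotient_mk'
  intro W hW
  have hpre := hmk.continuousAt (x := v) hW
  let G : (Fin i → Y) × I → (Fin (i * q) → Z) := fun w k => F (w.1 (c k).1, w.2)
  have hG : Continuous G := by fun_prop
  have hpre2 : G ⁻¹' ((fun v : Fin (i * q) → Z =>
      (Quotient.mk (spSetoid Z (i * q)) v : SymProd Z (i * q))) ⁻¹' W) ∈
      𝓝 ((fun j => (e0 x0 j : Y)), t0) := hG.continuousAt (mem_map.1 hpre)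
  rw [nhds_prod_eq] at hpre2
  obtain ⟨P, hP, R, hR, hPR⟩ := Filter.mem_prod_iff.1 hpre2
  obtain ⟨ε, hε, hball⟩ := Metric.mem_nhds_iff.1 hP
  have hx : ∀ᶠ x : {x | (T x).card = i} in 𝓝 x0, ∃ f : T x0.1 ≃ T x.1,
      ∀ y, dist (f y : Y) (y : Y) < ε := by
    have := continuous_subtype_val.continuousAt.eventually (hT x0.1 ε hε)
    filter_upwards [this] with x hx
    exact hx (x.2.trans x0.2.symm)
  rw [mem_map, nhds_prod_eq]
  refine Filter.mem_of_superset (Filter.prod_mem_prod hx hR) ?_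
  rintro ⟨x, t⟩ ⟨⟨f, hf⟩, ht⟩
  have hmem : ((fun j => (f (e0 x0 j) : Y)), t) ∈ P ×ˢ R := by
    refine ⟨hball ?_, ht⟩
    rw [Metric.mem_ball, dist_pi_lt_iff hε]
    intro j
    exact hf _
  have hW' := hPR hmem
  simp only [mem_preimage] at hW' ⊢
  convert hW' using 1
  let sg : Equiv.Perm (Fin i) := ((e0 x0).trans f).trans (e0 x).symm
  apply Quotient.sound
  refine ⟨(c.trans (sg.prodCongr (Equiv.refl _))).trans c.symm, ?_⟩
  funext k
  simp [G, sg]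

/-- If `dTC_r[p : E → B] < n` then `E^r_B` is covered by sets
`A₁, …, Aₙ`, each of which deforms inside `SP^{n!}(E^r_B)` to the diagonal
`Δ_r(E) ⊆ E^r_B ⊆ SP^{n!}(E^r_B)`: there are homotopies `H_i : A_i × [0,1] → SP^{n!}(E^r_B)`
with `H_i(a,0) = δ_{n!}(a)` and `H_i(a,1) ∈ δ_{n!}(Δ_r(E))`. -/
theorem exists_cover_deforming_to_diagonal {E B : Type} [MetricSpace E] [TopologicalSpace B]
    (p : E → B) (hp : IsHurewiczFibration p) (r : ℕ) (hr : 2 ≤ r) (n : ℕ) (hn : 1 ≤ n)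
    (hlt : dTCfib p r < (n : ℕ∞)) :
    ∃ A : Fin n → Set (FibredProd p r), (⋃ i, A i) = Set.univ ∧
      ∀ i, ∃ H : (A i) × I → SymProd (FibredProd p r) (Nat.factorial n),
        Continuous H ∧
        (∀ a : A i, H (a, 0) = spDiag (Nat.factorial n) (a : FibredProd p r)) ∧
        ∀ a : A i, ∃ e : E, H (a, 1) = spDiag (Nat.factorial n) (fibDiag p r e) := by
  obtain ⟨T, hT, hmatch⟩ := aux_dsecat (parmEval p r) n hlt
  let F : FibredPaths p × I → FibredProd p r := fun w =>
    ⟨fun j => w.1.1 (σ w.2 * tDiv r j), by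
      obtain ⟨b, hb⟩ := w.1.2
      intro i j
      rw [hb, hb]⟩
  have hF : Continuous F := by
    refine Continuous.subtype_mk (continuous_pi fun j => ?_) _
    have h1 : Continuous (fun w : FibredPaths p × I => (w.1.1 : C(I, E))) :=
      continuous_subtype_val.comp continuous_fst
    have h2 : Continuous (fun w : FibredPaths p × I => σ w.2 * tDiv r j) := by fun_prop
    exact h1.eval h2
  refine ⟨fun i => {x | (T x).card = i + 1}, ?_, fun i => ?_⟩
  · refine eq_univ_of_forall fun x => mem_iUnion.2 ?_
    obtain ⟨hne, hc, -⟩ := hT x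
    have := hne.card_pos
    exact ⟨⟨(T x).card - 1, by omega⟩, by simp; omega⟩
  · obtain ⟨e, he⟩ := aux_homotopy T hmatch F hF (i + 1) n.factorial
      (Nat.dvd_factorial (by omega) i.2)
    refine ⟨_, he, fun a => ?_, fun a => ⟨a.1.1 ⟨0, by omega⟩, ?_⟩⟩
    · have hk : ∀ k, F (e a k, 0) = a.1 := by
        intro k
        have : parmEval p r (e a k) = a.1 := (hT a.1).2.2 (e a k).2
        generalize ((e a k : T a.1) : FibredPaths p) = γ at this ⊢
        rw [← this]
        apply Subtype.ext
        funext j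
        simp [F, parmEval]
      simp only [hk]; rfl
    · have hk : ∀ k, F (e a k, 1) = fibDiag p r (a.1.1 ⟨0, by omega⟩) := by
        intro k
        have : parmEval p r (e a k) = a.1 := (hT a.1).2.2 (e a k).2
        generalize ((e a k : T a.1) : FibredPaths p) = γ at this ⊢
        rw [← this]
        apply Subtype.ext
        funext j
        have h0 : tDiv r ⟨0, by omega⟩ = 0 := by
          simp [tDiv]
        simp [F, parmEval, fibDiag, h0]
      simp only [hk]; rfl
end
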